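/- arXiv:2011.14511 — 3 statements merged into one kernel-verified Lean document; each statement's English description precedes it below -/
import Mathlib

section
/- Let E be a real inner product space and let a, b, c ∈ E. Then ⟨a − b, (3/4)a + (1/4)c⟩ = (1/2)(‖a‖² − ‖b‖²) + (1/8)(‖a − b‖² − ‖b − c‖²) + (1/8)‖a − 2b + c‖². (This is the key identity used to test the modified Crank–Nicolson time difference (H^{n+1} − H^n)/τ against the Adams–Moulton average (3/4)H^{n+1} + (1/4)H^{n−1}, yielding a telescoping energy plus nonnegative remainder.) -/
open RealInnerProductSpace

/-!
The Adams–Moulton average is `(1/2) • (a + b) + (1/4) • (a - 2 • b + c)`. Tested against `a - b`,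
the sum `a + b` yields a difference of squares; the second difference is `(a - b) - (b - c)`, so
polarization turns its contribution into a telescoping term plus a square.
-/

section

open RCLike
open scoped InnerProductSpace

variable {𝕜 E : Type*} [RCLike 𝕜] [SeminormedAddCommGroup E] [InnerProductSpace 𝕜 E]

theorem re_inner_sub_add_eq_norm_sq_sub_norm_sq (x y : E) :
    re ⟪x - y, x + y⟫_𝕜 = ‖x‖ ^ 2 - ‖y‖ ^ 2 := by
  simp only [inner_sub_left, inner_add_right, map_sub, map_add, inner_self_eq_norm_sq,
    inner_re_symm y x]
  ring

theorem re_inner_self_sub (x y : E) :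
    re ⟪x, x - y⟫_𝕜 = (‖x‖ ^ 2 - ‖y‖ ^ 2 + ‖x - y‖ ^ 2) / 2 := by
  rw [inner_sub_right, map_sub, inner_self_eq_norm_sq, @norm_sub_sq 𝕜]
  ring

theorem re_inner_sub_second_difference (a b c : E) :
    re ⟪a - b, a - (2 : 𝕜) • b + c⟫_𝕜 =
      (‖a - b‖ ^ 2 - ‖b - c‖ ^ 2 + ‖a - (2 : 𝕜) • b + c‖ ^ 2) / 2 := by
  have second_difference_eq : a - (2 : 𝕜) • b + c = (a - b) - (b - c) := by module
  rw [second_difference_eq, re_inner_self_sub]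

theorem modified_crank_nicolson_identity_general (σ θ : ℝ) (a b c : E) :
    re ⟪a - b, (σ : 𝕜) • (a + b) + (θ : 𝕜) • (a - (2 : 𝕜) • b + c)⟫_𝕜 =
      σ * (‖a‖ ^ 2 - ‖b‖ ^ 2) + θ / 2 * (‖a - b‖ ^ 2 - ‖b - c‖ ^ 2)
        + θ / 2 * ‖a - (2 : 𝕜) • b + c‖ ^ 2 := by
  rw [inner_add_right, inner_smul_right, inner_smul_right, map_add, re_ofReal_mul, re_ofReal_mul,
    re_inner_sub_add_eq_norm_sq_sub_norm_sq, re_inner_sub_second_difference]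
  ring

end

/-- The key identity (3.37) used to test the modified Crank–Nicolson time difference
against the Adams–Moulton average `(3/4) a + (1/4) c`. -/
theorem modified_crank_nicolson_identity
    {E : Type*} [NormedAddCommGroup E] [InnerProductSpace ℝ E] (a b c : E) :
    ⟪a - b, (3/4 : ℝ) • a + (1/4 : ℝ) • c⟫ =
      (1/2) * (‖a‖^2 - ‖b‖^2) + (1/8) * (‖a - b‖^2 - ‖b - c‖^2)
        + (1/8) * ‖a - (2 : ℝ) • b + c‖^2 := by
  have average_eq : (3/4 : ℝ) • a + (1/4 : ℝ) • c =
      (1/2 : ℝ) • (a + b) + (1/4 : ℝ) • (a - (2 : ℝ) • b + c) := by module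
  rw [average_eq]
  exact (modified_crank_nicolson_identity_general (𝕜 := ℝ) (1/2) (1/4) a b c).trans (by ring)
end

section
/- Let μ, σ, ν > 0 and let H, u : ℝ × ℝ³ → ℝ³, p : ℝ × ℝ³ → ℝ be smooth functions such that for all t the spatial supports of H(t,·) and u(t,·) are contained in a fixed compact set K ⊂ ℝ³, and such that pointwise on ℝ × ℝ³: μ∂ₜH + σ⁻¹∇×(∇×H) − μ∇×(u×H) = 0, ∂ₜu + (u·∇)u − νΔu + ∇p = −μH×(∇×H), and ∇·u = 0 (spatial differential operators in the space variable). Then the total energy t ↦ (μ/2)∫_{ℝ³}‖H(t,x)‖² dx + (1/2)∫_{ℝ³}‖u(t,x)‖² dx is nonincreasing in t. -/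
/-!
The energy balance comes from testing the induction equation with `H` and the momentum equation
with `u`. Since `u` is solenoidal and compactly supported, transport and pressure do no work, and
integration by parts turns the diffusive terms into `-σ⁻¹ ∫ |∇ × H|²` and `-ν ∫ |∇u|²`. The
remaining coupling terms are `μ ∫ (∇ × H) · (u × H)` and `-μ ∫ u · (H × (∇ × H))`, which cancel by
the cyclic symmetry of the triple product.
-/

open MeasureTheory

/-- Partial derivative `∂_j f` of a scalar field on `ℝ³`. -/
noncomputable def pd (j : Fin 3) (f : (Fin 3 → ℝ) → ℝ) (x : Fin 3 → ℝ) : ℝ :=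
  fderiv ℝ f x (Pi.single j 1)

/-- Curl of a vector field on `ℝ³`. -/
noncomputable def curl (F : (Fin 3 → ℝ) → (Fin 3 → ℝ)) (x : Fin 3 → ℝ) : Fin 3 → ℝ :=
  ![pd 1 (fun y => F y 2) x - pd 2 (fun y => F y 1) x,
    pd 2 (fun y => F y 0) x - pd 0 (fun y => F y 2) x,
    pd 0 (fun y => F y 1) x - pd 1 (fun y => F y 0) x]

/-- Divergence of a vector field on `ℝ³`. -/
noncomputable def div3 (F : (Fin 3 → ℝ) → (Fin 3 → ℝ)) (x : Fin 3 → ℝ) : ℝ :=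
  ∑ j, pd j (fun y => F y j) x

/-- Cross product in `ℝ³`. -/
def cross (a b : Fin 3 → ℝ) : Fin 3 → ℝ :=
  ![a 1 * b 2 - a 2 * b 1, a 2 * b 0 - a 0 * b 2, a 0 * b 1 - a 1 * b 0]

/-- Directional derivative `(F·∇)G`, with `i`-th component `Σ_j F_j ∂_j G_i`. -/
noncomputable def dirDeriv (F G : (Fin 3 → ℝ) → (Fin 3 → ℝ)) (x : Fin 3 → ℝ) : Fin 3 → ℝ :=
  fun i => ∑ j, F x j * pd j (fun y => G y i) x

/-- Componentwise Laplacian of a vector field on `ℝ³`. -/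
noncomputable def lap (F : (Fin 3 → ℝ) → (Fin 3 → ℝ)) (x : Fin 3 → ℝ) : Fin 3 → ℝ :=
  fun i => ∑ j, pd j (fun y => pd j (fun z => F z i) y) x

/-- Gradient of a scalar field on `ℝ³`. -/
noncomputable def grad (p : (Fin 3 → ℝ) → ℝ) (x : Fin 3 → ℝ) : Fin 3 → ℝ :=
  fun i => pd i p x

open scoped Matrix

theorem contDiff_slice {T E G : Type*} [NormedAddCommGroup T] [NormedSpace ℝ T]
    [NormedAddCommGroup E] [NormedSpace ℝ E] [NormedAddCommGroup G] [NormedSpace ℝ G]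
    {g : T → E → G} {n : WithTop ℕ∞} (hg : ContDiff ℝ n fun q : T × E => g q.1 q.2) (t : T) :
    ContDiff ℝ n (g t) :=
  hg.comp (contDiff_const.prodMk contDiff_id)

section ParametricIntegral

variable {E : Type*} [NormedAddCommGroup E] [NormedSpace ℝ E] [MeasurableSpace E] [BorelSpace E]
  {m : Measure E} [IsFiniteMeasureOnCompacts m] {K : Set E}

theorem hasDerivAt_integral_of_contDiff_of_isCompact
    {G : Type*} [NormedAddCommGroup G] [NormedSpace ℝ G] {g : ℝ → E → G}
    (hg : ContDiff ℝ 1 fun q : ℝ × E => g q.1 q.2) (hK : IsCompact K)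
    (hgK : ∀ s, ∀ x ∉ K, g s x = 0) (t : ℝ) :
    HasDerivAt (fun s => ∫ x, g s x ∂m) (∫ x, deriv (fun s => g s x) t ∂m) t := by
  set g' : ℝ × E → G := fun q => fderiv ℝ (fun q : ℝ × E => g q.1 q.2) q (1, 0)
  have hderiv (s x) : HasDerivAt (fun s => g s x) (g' (s, x)) s :=
    (hg.differentiable one_ne_zero (s, x)).hasFDerivAt.comp_hasDerivAt (f := fun s => (s, x)) s
      ((hasDerivAt_id s).prodMk (hasDerivAt_const s x))
  have hg'_cont : Continuous g' := (hg.continuous_fderiv one_ne_zero).clm_apply continuous_const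
  have hg'_zero (s) : ∀ x ∉ K, g' (s, x) = 0 := fun x hx => by
    rw [← (hderiv s x).deriv]
    simp [hgK _ x hx]
  have integrable_slice {f : ℝ × E → G} (hf : Continuous f) (s : ℝ)
      (hfK : ∀ x ∉ K, f (s, x) = 0) : Integrable (fun x => f (s, x)) m :=
    (hf.comp (by fun_prop)).integrable_of_hasCompactSupport (.intro hK hfK)
  obtain ⟨C, hC⟩ := ((isCompact_closedBall t 1).prod hK).exists_bound_of_continuousOn
    hg'_cont.continuousOn
  have hbound (x) : ∀ s ∈ Metric.closedBall t 1, ‖g' (s, x)‖ ≤ K.indicator (fun _ => C) x := by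
    intro s hs
    by_cases hx : x ∈ K
    · simpa [hx] using hC (s, x) ⟨hs, hx⟩
    · simp [hx, hg'_zero s x hx]
  have hbound_int : Integrable (K.indicator fun _ => C) m :=
    (integrable_indicator_iff hK.measurableSet).2 (integrableOn_const hK.measure_lt_top.ne)
  simp only [(hderiv _ _).deriv]
  exact (hasDerivAt_integral_of_dominated_loc_of_deriv_le (Metric.closedBall_mem_nhds t one_pos)
    (.of_forall fun s => (integrable_slice hg.continuous s (hgK s)).aestronglyMeasurable)
    (integrable_slice hg.continuous t (hgK t))
    (integrable_slice hg'_cont t (hg'_zero t)).aestronglyMeasurable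
    (.of_forall hbound) hbound_int (.of_forall fun x s _ => hderiv s x)).2

theorem hasDerivAt_integral_sum_sq {ι : Type*} [Fintype ι] {A : ℝ → E → ι → ℝ}
    (hA : ContDiff ℝ 1 fun q : ℝ × E => A q.1 q.2) (hK : IsCompact K)
    (hAK : ∀ s, ∀ x ∉ K, A s x = 0) (t : ℝ) :
    HasDerivAt (fun s => ∫ x, ∑ i, (A s x i) ^ 2 ∂m)
      (2 * ∫ x, A t x ⬝ᵥ deriv (fun s => A s x) t ∂m) t := by
  have hA_deriv (x) : HasDerivAt (fun s => A s x) (deriv (fun s => A s x) t) t :=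
    ((hA.comp (contDiff_id.prodMk contDiff_const)).differentiable one_ne_zero t).hasDerivAt
  have hsq_deriv (x) : deriv (fun s => ∑ i, (A s x i) ^ 2) t
      = 2 * (A t x ⬝ᵥ deriv (fun s => A s x) t) := by
    rw [(HasDerivAt.fun_sum fun i _ => (hasDerivAt_pi.1 (hA_deriv x) i).fun_pow 2).deriv,
      dotProduct, Finset.mul_sum]
    exact Finset.sum_congr rfl fun i _ => by push_cast; ring
  have hsq_contDiff : ContDiff ℝ 1 fun q : ℝ × E => ∑ i, (A q.1 q.2 i) ^ 2 :=
    ContDiff.sum fun i _ => (contDiff_pi.1 hA i).pow 2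
  simpa only [hsq_deriv, integral_const_mul] using
    hasDerivAt_integral_of_contDiff_of_isCompact (m := m) (g := fun s x => ∑ i, (A s x i) ^ 2)
      hsq_contDiff hK (fun s x hx => by simp [hAK s x hx]) t

end ParametricIntegral

theorem hasCompactSupport_apply {X ι : Type*} [TopologicalSpace X] {A : X → ι → ℝ}
    (hA : HasCompactSupport A) (i : ι) : HasCompactSupport fun x => A x i :=
  hA.mono fun x hx hAx => hx (by simp [hAx])

theorem integrable_dotProduct {X ι : Type*} [TopologicalSpace X] [MeasurableSpace X]
    [OpensMeasurableSpace X] {m : Measure X} [IsFiniteMeasureOnCompacts m] [Fintype ι]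
    {A B : X → ι → ℝ} (hA : Continuous A) (hB : Continuous B) (hA' : HasCompactSupport A) :
    Integrable (fun x => A x ⬝ᵥ B x) m :=
  (hA.dotProduct hB).integrable_of_hasCompactSupport <|
    hA'.mono fun x hx hAx => hx (by simp [hAx])

section PartialDerivative

variable {j : Fin 3} {f g : (Fin 3 → ℝ) → ℝ} {x : Fin 3 → ℝ} {k n : WithTop ℕ∞}

theorem pd_sub (hf : DifferentiableAt ℝ f x) (hg : DifferentiableAt ℝ g x) :
    pd j (fun y => f y - g y) x = pd j f x - pd j g x := by
  simp [pd, fderiv_fun_sub hf hg]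

theorem pd_mul (hf : DifferentiableAt ℝ f x) (hg : DifferentiableAt ℝ g x) :
    pd j (fun y => f y * g y) x = f x * pd j g x + g x * pd j f x := by
  simp [pd, fderiv_fun_mul hf hg]

theorem pd_sum {ι : Type*} {s : Finset ι} {f : ι → (Fin 3 → ℝ) → ℝ}
    (hf : ∀ i ∈ s, DifferentiableAt ℝ (f i) x) :
    pd j (fun y => ∑ i ∈ s, f i y) x = ∑ i ∈ s, pd j (f i) x := by
  simp [pd, fderiv_fun_sum hf]

theorem contDiff_pd (hf : ContDiff ℝ n f) (hkn : k + 1 ≤ n) : ContDiff ℝ k (pd j f) :=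
  (hf.fderiv_right hkn).clm_apply contDiff_const

theorem integrable_pd (hf : ContDiff ℝ 1 f) (hf' : HasCompactSupport f) : Integrable (pd j f) :=
  (contDiff_pd hf (zero_add 1).le).continuous.integrable_of_hasCompactSupport
    (hf'.fderiv_apply ℝ _)

theorem integral_pd_eq_zero (hf : ContDiff ℝ 1 f) (hf' : HasCompactSupport f) :
    ∫ x, pd j f x = 0 := by
  simpa [pd] using integral_mul_fderiv_eq_neg_fderiv_mul_of_integrable (μ := volume)
    (f := fun _ => (1 : ℝ)) (g := f) (v := Pi.single j 1) (by simp)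
    (by simpa only [pd, one_mul] using (integrable_pd hf hf' : Integrable fun x => pd j f x))
    (by simpa using hf.continuous.integrable_of_hasCompactSupport hf')
    (by simp) (fun x _ => hf.differentiable one_ne_zero x)

end PartialDerivative

section VectorCalculus

theorem dotProduct_cross_rotate (a b c : Fin 3 → ℝ) : a ⬝ᵥ cross b c = b ⬝ᵥ cross c a :=
  triple_product_permutation a b c

variable {A B F : (Fin 3 → ℝ) → (Fin 3 → ℝ)} {q : (Fin 3 → ℝ) → ℝ} {x : Fin 3 → ℝ}
  {k n : WithTop ℕ∞}

theorem contDiff_grad (hq : ContDiff ℝ n q) (hkn : k + 1 ≤ n) : ContDiff ℝ k (grad q) :=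
  contDiff_pi' fun _ => contDiff_pd hq hkn

theorem contDiff_curl (hA : ContDiff ℝ n A) (hkn : k + 1 ≤ n) : ContDiff ℝ k (curl A) := by
  have hpd (i j) : ContDiff ℝ k (pd j fun y => A y i) := contDiff_pd (contDiff_pi.1 hA i) hkn
  refine contDiff_pi' fun i => ?_
  fin_cases i <;> exact (hpd _ _).sub (hpd _ _)

theorem contDiff_cross (hA : ContDiff ℝ n A) (hB : ContDiff ℝ n B) :
    ContDiff ℝ n fun y => cross (A y) (B y) := by
  have hmul (i j) : ContDiff ℝ n fun y => A y i * B y j :=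
    (contDiff_pi.1 hA i).mul (contDiff_pi.1 hB j)
  refine contDiff_pi' fun i => ?_
  fin_cases i <;> exact (hmul _ _).sub (hmul _ _)

theorem continuous_dirDeriv (hF : Continuous F) (hA : ContDiff ℝ 1 A) :
    Continuous (dirDeriv F A) :=
  continuous_pi fun i => continuous_finsetSum _ fun j _ => ((continuous_apply j).comp hF).mul
    (contDiff_pd (contDiff_pi.1 hA i) (zero_add 1).le).continuous

theorem continuous_div3 (hA : ContDiff ℝ 1 A) : Continuous (div3 A) :=
  continuous_finsetSum _ fun j _ => (contDiff_pd (contDiff_pi.1 hA j) (zero_add 1).le).continuous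

theorem continuous_lap (hA : ContDiff ℝ 2 A) : Continuous (lap A) :=
  continuous_pi fun i => continuous_div3 (contDiff_grad (contDiff_pi.1 hA i) one_add_one_eq_two.le)

theorem hasCompactSupport_grad (hq : HasCompactSupport q) : HasCompactSupport (grad q) :=
  (hq.fderiv ℝ).mono fun x hx hqx => hx (by ext i; simp [grad, pd, hqx])

theorem div3_smul (hq : DifferentiableAt ℝ q x) (hA : DifferentiableAt ℝ A x) :
    div3 (fun y => q y • A y) x = q x * div3 A x + A x ⬝ᵥ grad q x := by
  simp only [div3, grad, dotProduct, Pi.smul_apply, smul_eq_mul,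
    pd_mul hq (differentiableAt_pi.1 hA _), Finset.sum_add_distrib, Finset.mul_sum]

theorem div3_cross (hA : DifferentiableAt ℝ A x) (hB : DifferentiableAt ℝ B x) :
    div3 (fun y => cross (A y) (B y)) x = B x ⬝ᵥ curl A x - A x ⬝ᵥ curl B x := by
  have hA' := differentiableAt_pi.1 hA
  have hB' := differentiableAt_pi.1 hB
  have hAB (i j) : DifferentiableAt ℝ (fun y => A y i * B y j) x := (hA' i).fun_mul (hB' j)
  simp only [div3, cross, curl, dotProduct, Fin.sum_univ_three, Matrix.cons_val,
    pd_sub (hAB _ _) (hAB _ _), pd_mul (hA' _) (hB' _)]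
  ring

theorem dotProduct_grad_dotProduct_self (hA : DifferentiableAt ℝ A x) :
    F x ⬝ᵥ grad (fun y => A y ⬝ᵥ A y) x = 2 * (A x ⬝ᵥ dirDeriv F A x) := by
  have hA' := differentiableAt_pi.1 hA
  have hgrad : grad (fun y => A y ⬝ᵥ A y) x
      = fun j => 2 * ∑ i, A x i * pd j (fun y => A y i) x := by
    funext j
    simp only [grad, dotProduct]
    rw [pd_sum fun i _ => (hA' i).fun_mul (hA' i), Finset.mul_sum]
    exact Finset.sum_congr rfl fun i _ => by rw [pd_mul (hA' i) (hA' i)]; ring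
  rw [hgrad]
  simp only [dirDeriv, dotProduct, Fin.sum_univ_three]
  ring

theorem integrable_div3 (hA : ContDiff ℝ 1 A) (hA' : HasCompactSupport A) : Integrable (div3 A) :=
  integrable_finsetSum _ fun j _ =>
    integrable_pd (contDiff_pi.1 hA j) (hasCompactSupport_apply hA' j)

theorem integral_div3_eq_zero (hA : ContDiff ℝ 1 A) (hA' : HasCompactSupport A) :
    ∫ x, div3 A x = 0 := by
  unfold div3
  rw [integral_finsetSum _ fun j _ =>
    integrable_pd (contDiff_pi.1 hA j) (hasCompactSupport_apply hA' j)]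
  exact Finset.sum_eq_zero fun j _ =>
    integral_pd_eq_zero (contDiff_pi.1 hA j) (hasCompactSupport_apply hA' j)

theorem integrable_dotProduct_grad (hq : ContDiff ℝ 1 q) (hA : Continuous A)
    (hA' : HasCompactSupport A) : Integrable fun x => A x ⬝ᵥ grad q x :=
  integrable_dotProduct hA (contDiff_grad hq (zero_add 1).le).continuous hA'

theorem integrable_mul_div3 (hq : ContDiff ℝ 1 q) (hA : ContDiff ℝ 1 A)
    (hA' : HasCompactSupport A) : Integrable fun x => q x * div3 A x := by
  have hqA' : HasCompactSupport fun y => q y • A y := hA'.smul_left (f := q)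
  refine ((integrable_div3 (hq.smul hA) hqA').sub
    (integrable_dotProduct_grad hq hA.continuous hA')).congr (.of_forall fun x => ?_)
  exact sub_eq_of_eq_add
    (div3_smul (hq.differentiable one_ne_zero x) (hA.differentiable one_ne_zero x))

theorem integral_mul_div3 (hq : ContDiff ℝ 1 q) (hA : ContDiff ℝ 1 A)
    (hA' : HasCompactSupport A) : ∫ x, q x * div3 A x = -∫ x, A x ⬝ᵥ grad q x := by
  have hqA' : HasCompactSupport fun y => q y • A y := hA'.smul_left (f := q)
  refine eq_neg_of_add_eq_zero_left ?_
  rw [← integral_add (integrable_mul_div3 hq hA hA')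
    (integrable_dotProduct_grad hq hA.continuous hA'), ← integral_div3_eq_zero (hq.smul hA) hqA']
  exact integral_congr_ae (.of_forall fun x =>
    (div3_smul (hq.differentiable one_ne_zero x) (hA.differentiable one_ne_zero x)).symm)

theorem integral_dotProduct_curl (hA : ContDiff ℝ 1 A) (hB : ContDiff ℝ 1 B)
    (hA' : HasCompactSupport A) : ∫ x, A x ⬝ᵥ curl B x = ∫ x, curl A x ⬝ᵥ B x := by
  have hAB : ContDiff ℝ 1 fun y => cross (A y) (B y) := contDiff_cross hA hB
  have hAB' : HasCompactSupport fun y => cross (A y) (B y) :=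
    hA'.mono fun x hx hAx => hx (by simp [cross, hAx])
  have hAcurl : Integrable fun x => A x ⬝ᵥ curl B x :=
    integrable_dotProduct hA.continuous (contDiff_curl hB (zero_add 1).le).continuous hA'
  have product_rule (x) :
      curl A x ⬝ᵥ B x = div3 (fun y => cross (A y) (B y)) x + A x ⬝ᵥ curl B x := by
    rw [div3_cross (hA.differentiable one_ne_zero x) (hB.differentiable one_ne_zero x),
      dotProduct_comm (curl A x), sub_add_cancel]
  simp only [product_rule]
  rw [integral_add (integrable_div3 hAB hAB') hAcurl, integral_div3_eq_zero hAB hAB', zero_add]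

theorem integral_dotProduct_lap (hA : ContDiff ℝ 1 A) (hB : ContDiff ℝ 2 B)
    (hB' : HasCompactSupport B) :
    ∫ x, A x ⬝ᵥ lap B x = -∫ x, ∑ i, grad (fun y => B y i) x ⬝ᵥ grad (fun y => A y i) x := by
  have hAi (i) : ContDiff ℝ 1 fun y => A y i := contDiff_pi.1 hA i
  have hgrad (i) : ContDiff ℝ 1 (grad fun y => B y i) :=
    contDiff_grad (contDiff_pi.1 hB i) one_add_one_eq_two.le
  have hgrad' (i) : HasCompactSupport (grad fun y => B y i) :=
    hasCompactSupport_grad (hasCompactSupport_apply hB' i)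
  have hlap (x) : A x ⬝ᵥ lap B x = ∑ i, A x i * div3 (grad fun y => B y i) x := rfl
  simp only [hlap]
  rw [integral_finsetSum _ fun i _ => integrable_mul_div3 (hAi i) (hgrad i) (hgrad' i),
    integral_finsetSum _ fun i _ =>
      integrable_dotProduct_grad (hAi i) (hgrad i).continuous (hgrad' i),
    ← Finset.sum_neg_distrib]
  exact Finset.sum_congr rfl fun i _ => integral_mul_div3 (hAi i) (hgrad i) (hgrad' i)

theorem integral_dotProduct_dirDeriv (hF : ContDiff ℝ 1 F) (hA : ContDiff ℝ 1 A)
    (hF' : HasCompactSupport F) :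
    ∫ x, A x ⬝ᵥ dirDeriv F A x = -(1 / 2) * ∫ x, (A x ⬝ᵥ A x) * div3 F x := by
  have hAA : ContDiff ℝ 1 fun y => A y ⬝ᵥ A y :=
    ContDiff.sum fun i _ => (contDiff_pi.1 hA i).mul (contDiff_pi.1 hA i)
  rw [integral_mul_div3 hAA hF hF']
  simp only [dotProduct_grad_dotProduct_self (hA.differentiable one_ne_zero _), integral_const_mul]
  ring

end VectorCalculus

section Energy

/-- The total energy of a magnetic field `H` and a velocity field `u`, with permeability `μ`. -/
noncomputable def mhdEnergy (μ : ℝ) (H u : (Fin 3 → ℝ) → (Fin 3 → ℝ)) : ℝ :=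
  (μ / 2) * (∫ x, ∑ i, (H x i) ^ 2) + (1 / 2) * (∫ x, ∑ i, (u x i) ^ 2)

/-- A classical solution, supported in `K`, of the incompressible MHD system without sources. The
resistivity `η` stands for `σ⁻¹`, so that `η = 0` is ideal MHD. -/
structure IsMHDSolution (μ η ν : ℝ) (K : Set (Fin 3 → ℝ))
    (H u : ℝ → (Fin 3 → ℝ) → (Fin 3 → ℝ)) (p : ℝ → (Fin 3 → ℝ) → ℝ) : Prop where
  contDiff_magnetic : ContDiff ℝ 1 fun q : ℝ × (Fin 3 → ℝ) => H q.1 q.2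
  contDiff_velocity : ContDiff ℝ 1 fun q : ℝ × (Fin 3 → ℝ) => u q.1 q.2
  contDiff_magnetic_slice : ∀ t, ContDiff ℝ 2 (H t)
  contDiff_velocity_slice : ∀ t, ContDiff ℝ 2 (u t)
  contDiff_pressure_slice : ∀ t, ContDiff ℝ 1 (p t)
  isCompact : IsCompact K
  tsupport_magnetic : ∀ t, tsupport (H t) ⊆ K
  tsupport_velocity : ∀ t, tsupport (u t) ⊆ K
  induction_eq : ∀ t x, μ • deriv (fun s => H s x) t + η • curl (curl (H t)) x
    - μ • curl (fun y => cross (u t y) (H t y)) x = 0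
  momentum_eq : ∀ t x, deriv (fun s => u s x) t + dirDeriv (u t) (u t) x
    - ν • lap (u t) x + grad (p t) x = -(μ • cross (H t x) (curl (H t) x))
  div_velocity : ∀ t x, div3 (u t) x = 0

theorem integral_dotProduct_of_induction_eq {μ η : ℝ} {H H' E : (Fin 3 → ℝ) → (Fin 3 → ℝ)}
    (hH : ContDiff ℝ 2 H) (hE : ContDiff ℝ 1 E) (hH_supp : HasCompactSupport H)
    (h : ∀ x, μ • H' x + η • curl (curl H) x - μ • curl E x = 0) :
    μ * ∫ x, H x ⬝ᵥ H' x
      = μ * (∫ x, curl H x ⬝ᵥ E x) - η * ∫ x, curl H x ⬝ᵥ curl H x := by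
  have hH₁ : ContDiff ℝ 1 H := hH.of_le one_le_two
  have hcurl : ContDiff ℝ 1 (curl H) := contDiff_curl hH one_add_one_eq_two.le
  have hint {B} (hB : ContDiff ℝ 1 B) : Integrable fun x => H x ⬝ᵥ curl B x :=
    integrable_dotProduct hH.continuous (contDiff_curl hB (zero_add 1).le).continuous hH_supp
  have htested (x) :
      μ * (H x ⬝ᵥ H' x) = μ * (H x ⬝ᵥ curl E x) - η * (H x ⬝ᵥ curl (curl H) x) := by
    have := congrArg (H x ⬝ᵥ ·) (h x)
    simp only [dotProduct_sub, dotProduct_add, dotProduct_smul, dotProduct_zero,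
      smul_eq_mul] at this
    linarith
  rw [← integral_const_mul, ← integral_dotProduct_curl hH₁ hE hH_supp,
    ← integral_dotProduct_curl hH₁ hcurl hH_supp]
  simp only [htested]
  rw [integral_sub ((hint hE).const_mul μ) ((hint hcurl).const_mul η), integral_const_mul,
    integral_const_mul]

theorem integral_dotProduct_of_momentum_eq {ν : ℝ} {u u' f : (Fin 3 → ℝ) → (Fin 3 → ℝ)}
    {p : (Fin 3 → ℝ) → ℝ} (hu : ContDiff ℝ 2 u) (hp : ContDiff ℝ 1 p) (hf : Continuous f)
    (hu_supp : HasCompactSupport u) (hdiv : ∀ x, div3 u x = 0)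
    (h : ∀ x, u' x + dirDeriv u u x - ν • lap u x + grad p x = f x) :
    ∫ x, u x ⬝ᵥ u' x = (∫ x, u x ⬝ᵥ f x)
      - ν * ∫ x, ∑ i, grad (fun y => u y i) x ⬝ᵥ grad (fun y => u y i) x := by
  have hu₁ : ContDiff ℝ 1 u := hu.of_le one_le_two
  have hint {B} (hB : Continuous B) : Integrable fun x => u x ⬝ᵥ B x :=
    integrable_dotProduct hu.continuous hB hu_supp
  have htransport : ∫ x, u x ⬝ᵥ dirDeriv u u x = 0 := by
    simp [integral_dotProduct_dirDeriv hu₁ hu₁ hu_supp, hdiv]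
  have hpressure : ∫ x, u x ⬝ᵥ grad p x = 0 := by
    simpa [hdiv] using integral_mul_div3 hp hu₁ hu_supp
  have htested (x) : u x ⬝ᵥ u' x = u x ⬝ᵥ f x + ν * (u x ⬝ᵥ lap u x)
      - u x ⬝ᵥ dirDeriv u u x - u x ⬝ᵥ grad p x := by
    simp only [← h x, dotProduct_sub, dotProduct_add, dotProduct_smul, smul_eq_mul]
    ring
  have hint_lap := (hint (continuous_lap hu)).const_mul ν
  have hint_transport := hint (continuous_dirDeriv hu.continuous hu₁)
  have hint_viscous : Integrable fun x => u x ⬝ᵥ f x + ν * (u x ⬝ᵥ lap u x) :=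
    (hint hf).add hint_lap
  have hint_work : Integrable fun x =>
      u x ⬝ᵥ f x + ν * (u x ⬝ᵥ lap u x) - u x ⬝ᵥ dirDeriv u u x :=
    hint_viscous.sub hint_transport
  simp only [htested]
  rw [integral_sub hint_work (integrable_dotProduct_grad hp hu.continuous hu_supp),
    integral_sub hint_viscous hint_transport, integral_add (hint hf) hint_lap,
    integral_const_mul, integral_dotProduct_lap hu₁ hu hu_supp, htransport, hpressure]
  ring

theorem IsMHDSolution.hasDerivAt_mhdEnergy {μ η ν : ℝ} {K : Set (Fin 3 → ℝ)}
    {H u : ℝ → (Fin 3 → ℝ) → (Fin 3 → ℝ)} {p : ℝ → (Fin 3 → ℝ) → ℝ}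
    (h : IsMHDSolution μ η ν K H u p) (t : ℝ) :
    HasDerivAt (fun s => mhdEnergy μ (H s) (u s))
      (-η * (∫ x, curl (H t) x ⬝ᵥ curl (H t) x)
        - ν * ∫ x, ∑ i, grad (fun y => u t y i) x ⬝ᵥ grad (fun y => u t y i) x) t := by
  have hH := h.contDiff_magnetic_slice t
  have hu := h.contDiff_velocity_slice t
  have hH_zero (s) : ∀ x ∉ K, H s x = 0 := fun x hx =>
    image_eq_zero_of_notMem_tsupport (mt (h.tsupport_magnetic s ·) hx)
  have hu_zero (s) : ∀ x ∉ K, u s x = 0 := fun x hx =>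
    image_eq_zero_of_notMem_tsupport (mt (h.tsupport_velocity s ·) hx)
  have huH : ContDiff ℝ 1 fun y => cross (u t y) (H t y) :=
    contDiff_cross (hu.of_le one_le_two) (hH.of_le one_le_two)
  have hcurl : ContDiff ℝ 1 (curl (H t)) := contDiff_curl hH one_add_one_eq_two.le
  have hlorentz : Continuous fun y => -(μ • cross (H t y) (curl (H t) y)) :=
    ((contDiff_cross (hH.of_le one_le_two) hcurl).continuous.const_smul μ).neg
  have hmagnetic := integral_dotProduct_of_induction_eq hH huH (.intro h.isCompact (hH_zero t))
    (h.induction_eq t)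
  have hkinetic := integral_dotProduct_of_momentum_eq hu (h.contDiff_pressure_slice t) hlorentz
    (.intro h.isCompact (hu_zero t)) (h.div_velocity t) (h.momentum_eq t)
  have hcoupling : ∫ x, u t x ⬝ᵥ -(μ • cross (H t x) (curl (H t) x))
      = -(μ * ∫ x, curl (H t) x ⬝ᵥ cross (u t x) (H t x)) := by
    simp only [dotProduct_neg, dotProduct_smul, smul_eq_mul, integral_neg, integral_const_mul,
      dotProduct_cross_rotate (curl (H t) _)]
  have hderiv := ((hasDerivAt_integral_sum_sq (m := volume) h.contDiff_magnetic h.isCompact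
      hH_zero t).const_mul (μ / 2)).add
    ((hasDerivAt_integral_sum_sq (m := volume) h.contDiff_velocity h.isCompact
      hu_zero t).const_mul (1 / 2))
  exact hderiv.congr_deriv (by linarith)

theorem mhd_energy_decay_general {μ η ν : ℝ} {K : Set (Fin 3 → ℝ)}
    {H u : ℝ → (Fin 3 → ℝ) → (Fin 3 → ℝ)} {p : ℝ → (Fin 3 → ℝ) → ℝ} (hη : 0 ≤ η) (hν : 0 ≤ ν)
    (h : IsMHDSolution μ η ν K H u p) : Antitone fun t => mhdEnergy μ (H t) (u t) := by
  have dotProduct_self_nonneg (a : Fin 3 → ℝ) : 0 ≤ a ⬝ᵥ a :=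
    Finset.sum_nonneg fun _ _ => mul_self_nonneg _
  refine antitone_of_deriv_nonpos
    (fun t => (h.hasDerivAt_mhdEnergy t).differentiableAt) fun t => ?_
  rw [(h.hasDerivAt_mhdEnergy t).deriv]
  have hohmic : 0 ≤ η * ∫ x, curl (H t) x ⬝ᵥ curl (H t) x :=
    mul_nonneg hη (integral_nonneg fun x => dotProduct_self_nonneg _)
  have hviscous : 0 ≤ ν * ∫ x, ∑ i, grad (fun y => u t y i) x ⬝ᵥ grad (fun y => u t y i) x :=
    mul_nonneg hν (integral_nonneg fun x => Finset.sum_nonneg fun i _ => dotProduct_self_nonneg _)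
  linarith

end Energy

/-- Energy decay (1.6) for the incompressible MHD system with zero sources `J = f = 0`:
the total energy `(μ/2)∫‖H‖² + (1/2)∫‖u‖²` is nonincreasing in time. -/
theorem mhd_energy_decay
    (μ σ ν : ℝ) (hμ : 0 < μ) (hσ : 0 < σ) (hν : 0 < ν)
    (H u : ℝ → (Fin 3 → ℝ) → (Fin 3 → ℝ)) (p : ℝ → (Fin 3 → ℝ) → ℝ)
    (hH : ContDiff ℝ (⊤ : ℕ∞) (fun q : ℝ × (Fin 3 → ℝ) => H q.1 q.2))
    (hu : ContDiff ℝ (⊤ : ℕ∞) (fun q : ℝ × (Fin 3 → ℝ) => u q.1 q.2))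
    (hp : ContDiff ℝ (⊤ : ℕ∞) (fun q : ℝ × (Fin 3 → ℝ) => p q.1 q.2))
    (K : Set (Fin 3 → ℝ)) (hK : IsCompact K)
    (hHsupp : ∀ t, tsupport (H t) ⊆ K) (husupp : ∀ t, tsupport (u t) ⊆ K)
    (heqH : ∀ t x, μ • deriv (fun s => H s x) t + σ⁻¹ • curl (curl (H t)) x
        - μ • curl (fun y => cross (u t y) (H t y)) x = 0)
    (hequ : ∀ t x, deriv (fun s => u s x) t + dirDeriv (u t) (u t) x
        - ν • lap (u t) x + grad (p t) x = -(μ • cross (H t x) (curl (H t) x)))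
    (hdiv : ∀ t x, div3 (u t) x = 0) :
    Antitone
      (fun t => (μ/2) * (∫ x, ∑ i, (H t x i)^2) + (1/2) * (∫ x, ∑ i, (u t x i)^2)) := by
  exact mhd_energy_decay_general (inv_nonneg.2 hσ.le) hν.le
    { contDiff_magnetic := contDiff_infty.1 hH 1
      contDiff_velocity := contDiff_infty.1 hu 1
      contDiff_magnetic_slice t := contDiff_infty.1 (contDiff_slice hH t) 2
      contDiff_velocity_slice t := contDiff_infty.1 (contDiff_slice hu t) 2
      contDiff_pressure_slice t := contDiff_infty.1 (contDiff_slice hp t) 1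
      isCompact := hK
      tsupport_magnetic := hHsupp
      tsupport_velocity := husupp
      induction_eq := heqH
      momentum_eq := hequ
      div_velocity := hdiv }
end

section
/- Let E be a real normed vector space, let f : ℝ → E be twice continuously differentiable, let t ∈ ℝ and τ > 0, and suppose ‖f''(s)‖ ≤ M for all s ∈ [t−τ, t+τ]. Then ‖(3/4)f(t+τ) + (1/4)f(t−τ) − f(t + τ/2)‖ ≤ (3/8)Mτ². (This is the second-order consistency of the implicit Adams–Moulton average (3/4)H^{n+1} + (1/4)H^{n−1} used in the modified Crank–Nicolson discretization of the magnetic diffusion term.) -/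
/-!
With `c = a x + b y`, `a + b = 1`, the first-order terms of the Taylor expansions of `f x` and `f y`
at `c` cancel in `a f x + b f y`. Both remainders are at most `M / 2` times the squared
distance to `c`, and since `x - c = b (x - y)` and `y - c = -a (x - y)`, their weighted sum is
`M / 2 * (a b² + b a²) ‖x - y‖² = M / 2 * a b ‖x - y‖²`. The Adams–Moulton average is the case
`a = 3 / 4`, `b = 1 / 4`, `x = t + τ`, `y = t - τ`.
-/

open Set AffineMap

section

variable {E F : Type*} [NormedAddCommGroup E] [NormedSpace ℝ E]
  [NormedAddCommGroup F] [NormedSpace ℝ F]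

theorem norm_image_sub_le_of_norm_deriv_le_mul_sub {g g' : ℝ → E} {a b C : ℝ} (hab : a ≤ b)
    (hg : ∀ u ∈ Icc a b, HasDerivWithinAt g (g' u) (Icc a b) u)
    (bound : ∀ u ∈ Ico a b, ‖g' u‖ ≤ C * (u - a)) :
    ‖g b - g a‖ ≤ C / 2 * (b - a) ^ 2 := by
  have hright : ∀ u ∈ Ico a b, HasDerivWithinAt (fun v ↦ g v - g a) (g' u) (Ici u) u :=
    fun u hu ↦ ((hg u (Ico_subset_Icc_self hu)).mono_of_mem_nhdsWithin
      (Icc_mem_nhdsGE_of_mem hu)).sub_const (g a)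
  have hmajorant : ∀ u, HasDerivAt (fun v ↦ C / 2 * (v - a) ^ 2) (C * (u - a)) u := fun u ↦
    ((((hasDerivAt_id' u).sub_const a).pow 2).const_mul (C / 2)).congr_deriv (by push_cast; ring)
  exact image_norm_le_of_norm_deriv_right_le_deriv_boundary
    (fun u hu ↦ (hg u hu).continuousWithinAt.sub continuousWithinAt_const)
    hright (by simp) hmajorant bound (right_mem_Icc.2 hab)

theorem norm_image_sub_sub_le_of_norm_hasFDerivWithin_sub_le {f : F → E} {f' : F → F →L[ℝ] E}
    {s : Set F} {c x : F} {M : ℝ} (hs : StarConvex ℝ c s) (hx : x ∈ s)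
    (hf : ∀ z ∈ s, HasFDerivWithinAt f (f' z) s z)
    (hf' : ∀ z ∈ s, ‖f' z - f' c‖ ≤ M * ‖z - c‖) :
    ‖f x - f c - f' c (x - c)‖ ≤ M / 2 * ‖x - c‖ ^ 2 := by
  have hline : MapsTo (lineMap c x) (Icc (0 : ℝ) 1) s := fun u hu ↦
    hs.segment_subset hx (segment_eq_image_lineMap ℝ c x ▸ mem_image_of_mem _ hu)
  have hderiv : ∀ u ∈ Icc (0 : ℝ) 1,
      HasDerivWithinAt (fun v ↦ f (lineMap c x v) - v • f' c (x - c))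
        ((f' (lineMap c x u) - f' c) (x - c)) (Icc 0 1) u := fun u hu ↦
    (((hf _ (hline hu)).comp_hasDerivWithinAt u hasDerivWithinAt_lineMap hline).sub
      ((hasDerivWithinAt_id u _).smul_const (f' c (x - c)))).congr_deriv
        (by rw [one_smul, sub_apply])
  have hbound : ∀ u ∈ Ico (0 : ℝ) 1,
      ‖(f' (lineMap c x u) - f' c) (x - c)‖ ≤ M * ‖x - c‖ ^ 2 * (u - 0) := fun u hu ↦
    calc ‖(f' (lineMap c x u) - f' c) (x - c)‖
        ≤ M * ‖lineMap c x u - c‖ * ‖x - c‖ :=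
          ContinuousLinearMap.le_of_opNorm_le _ (hf' _ (hline (Ico_subset_Icc_self hu))) _
      _ = M * ‖x - c‖ ^ 2 * (u - 0) := by
          rw [← dist_eq_norm, dist_lineMap_left, dist_comm, dist_eq_norm,
            Real.norm_of_nonneg hu.1]
          ring
  calc ‖f x - f c - f' c (x - c)‖ ≤ M * ‖x - c‖ ^ 2 / 2 * (1 - 0) ^ 2 := by
        simpa [sub_right_comm] using
          norm_image_sub_le_of_norm_deriv_le_mul_sub zero_le_one hderiv hbound
    _ = M / 2 * ‖x - c‖ ^ 2 := by ring

theorem adams_moulton_average_consistency_general {f : F → E} {f' : F → F →L[ℝ] E} {s : Set F}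
    {x y : F} {a b M : ℝ} (hs : Convex ℝ s) (hx : x ∈ s) (hy : y ∈ s)
    (hf : ∀ z ∈ s, HasFDerivWithinAt f (f' z) s z)
    (hf' : ∀ z ∈ s, ∀ w ∈ s, ‖f' z - f' w‖ ≤ M * ‖z - w‖)
    (ha : 0 ≤ a) (hb : 0 ≤ b) (hab : a + b = 1) :
    ‖a • f x + b • f y - f (a • x + b • y)‖ ≤ M / 2 * (a * b) * ‖x - y‖ ^ 2 := by
  set c := a • x + b • y with hc
  obtain rfl : a = 1 - b := eq_sub_of_add_eq hab
  have hcs : c ∈ s := hs hx hy ha hb hab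
  have taylor {z : F} (hz : z ∈ s) : ‖f z - f c - f' c (z - c)‖ ≤ M / 2 * ‖z - c‖ ^ 2 :=
    norm_image_sub_sub_le_of_norm_hasFDerivWithin_sub_le (hs.starConvex hcs) hz hf
      fun w hw ↦ hf' w hw c hcs
  have hxc : x - c = b • (x - y) := by rw [hc]; module
  have hyc : y - c = -((1 - b) • (x - y)) := by rw [hc]; module
  calc ‖(1 - b) • f x + b • f y - f c‖
      = ‖(1 - b) • (f x - f c - f' c (x - c)) + b • (f y - f c - f' c (y - c))‖ := by
        rw [hxc, hyc, map_neg, map_smul, map_smul]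
        congr 1
        module
    _ ≤ (1 - b) * (M / 2 * ‖x - c‖ ^ 2) + b * (M / 2 * ‖y - c‖ ^ 2) := by
        refine norm_add_le_of_le ?_ ?_
        · rw [norm_smul_of_nonneg ha]
          exact mul_le_mul_of_nonneg_left (taylor hx) ha
        · rw [norm_smul_of_nonneg hb]
          exact mul_le_mul_of_nonneg_left (taylor hy) hb
    _ = M / 2 * ((1 - b) * b) * ‖x - y‖ ^ 2 := by
        rw [hxc, hyc, norm_neg, norm_smul_of_nonneg ha, norm_smul_of_nonneg hb]
        ring

theorem norm_fderiv_fderiv_eq_norm_iteratedDeriv_two {𝕜 G : Type*} [NontriviallyNormedField 𝕜]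
    [NormedAddCommGroup G] [NormedSpace 𝕜 G] (f : 𝕜 → G) (z : 𝕜) :
    ‖fderiv 𝕜 (fderiv 𝕜 f) z‖ = ‖iteratedDeriv 2 f z‖ := by
  rw [← norm_iteratedFDeriv_one, norm_iteratedFDeriv_fderiv,
    norm_iteratedFDeriv_eq_norm_iteratedDeriv]

theorem norm_fderiv_sub_le_of_norm_iteratedDeriv_two_le {𝕜 G : Type*} [RCLike 𝕜]
    [NormedAddCommGroup G] [NormedSpace 𝕜 G] {f : 𝕜 → G} {s : Set 𝕜} {M : ℝ}
    (hs : Convex ℝ s) (hf : ∀ z ∈ s, DifferentiableAt 𝕜 (fderiv 𝕜 f) z)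
    (hM : ∀ z ∈ s, ‖iteratedDeriv 2 f z‖ ≤ M) :
    ∀ z ∈ s, ∀ w ∈ s, ‖fderiv 𝕜 f z - fderiv 𝕜 f w‖ ≤ M * ‖z - w‖ := fun _ hz _ hw ↦
  hs.norm_image_sub_le_of_norm_fderiv_le hf
    (fun z hz ↦ (norm_fderiv_fderiv_eq_norm_iteratedDeriv_two f z).trans_le (hM z hz)) hw hz

end

/-- Second-order consistency of the implicit Adams–Moulton average
`(3/4)f(t+τ) + (1/4)f(t−τ)` at the half time level `t + τ/2`. -/
theorem adams_moulton_average_consistency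
    {E : Type*} [NormedAddCommGroup E] [NormedSpace ℝ E]
    (f : ℝ → E) (hf : ContDiff ℝ 2 f) (t τ M : ℝ) (hτ : 0 < τ)
    (hM : ∀ s ∈ Set.Icc (t - τ) (t + τ), ‖iteratedDeriv 2 f s‖ ≤ M) :
    ‖(3/4 : ℝ) • f (t + τ) + (1/4 : ℝ) • f (t - τ) - f (t + τ/2)‖ ≤ 3/8 * M * τ^2 := by
  have hf' : Differentiable ℝ (fderiv ℝ f) :=
    (hf.fderiv_right (m := 1) le_rfl).differentiable one_ne_zero
  have hI : Convex ℝ (Icc (t - τ) (t + τ)) := convex_Icc _ _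
  convert adams_moulton_average_consistency_general (a := 3 / 4) (b := 1 / 4) hI
    (right_mem_Icc.2 (by linarith)) (left_mem_Icc.2 (by linarith))
    (fun z _ ↦ (hf.differentiable two_ne_zero z).hasFDerivAt.hasFDerivWithinAt)
    (norm_fderiv_sub_le_of_norm_iteratedDeriv_two_le hI (fun z _ ↦ hf' z) hM)
    (by norm_num) (by norm_num) (by norm_num) using 1
  · congr 3
    simp only [smul_eq_mul]
    ring
  · rw [Real.norm_eq_abs, sq_abs]
    ring
end
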